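/- The map ∫ from the Hall algebra H(kΓ) of a finite quiver Γ over a finite field k to the q-twisted polynomial ring, sending the class [M] of a representation M to x^{dim M}/#Aut(M), is an algebra homomorphism, where the twisted product satisfies x^α ∘ x^β = (#k)^{-⟨α,β⟩} x^{α+β} and ⟨·,·⟩ is the Euler–Ringel form of Γ. -/

import Mathlib

/-! STATEMENT 14: the integration map `∫ : H(kΓ) → ℚ^tw[x_i | i ∈ I]`,
`[M] ↦ x^{dim M}/#Aut M`, from the Hall algebra of a finite quiver Γ over a finite field k
to the q-twisted polynomial ring (with `x^α ∘ x^β = (#k)^{-⟨α,β⟩} x^{α+β}`), is an algebra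
homomorphism.  Since `∫` is defined ℚ-linearly on the basis of isomorphism classes, this is
equivalent to multiplicativity on basis elements: for all representations M, N,
`∑_{[X] : dim X = dim M + dim N} g^X_{M,N} / #Aut X = (#k)^{-⟨dim M, dim N⟩} / (#Aut M · #Aut N)`,
where `g^X_{M,N}` counts subrepresentations U ⊆ X with U ≅ N and X/U ≅ M, and the sum runs
over the isomorphism classes of representations of dimension vector `dim M + dim N`. -/

variable (I A : Type) (src tgt : A → I) (k : Type) [Field k]

/-- A finite-dimensional representation of the quiver with vertices I, arrows A. -/
structure QRep where
  V : I → Type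
  [acg : ∀ i, AddCommGroup (V i)]
  [mod : ∀ i, Module k (V i)]
  [fd : ∀ i, FiniteDimensional k (V i)]
  f : ∀ a : A, V (src a) →ₗ[k] V (tgt a)

attribute [instance] QRep.acg QRep.mod QRep.fd

namespace QRep

variable {I A src tgt k}

/-- The dimension vector of a representation. -/
noncomputable def dimVec (M : QRep I A src tgt k) : I → ℕ :=
  fun i => Module.finrank k (M.V i)

/-- Isomorphisms of representations. -/
def Isos (M N : QRep I A src tgt k) : Type :=
  {φ : ∀ i, M.V i ≃ₗ[k] N.V i //
    ∀ (a : A) (x : M.V (src a)), φ (tgt a) (M.f a x) = N.f a (φ (src a) x)}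

/-- Two representations are isomorphic if there is an isomorphism between them. -/
def IsIso (M N : QRep I A src tgt k) : Prop := Nonempty (Isos M N)

/-- The number of automorphisms of a representation. -/
noncomputable def autCard (M : QRep I A src tgt k) : ℕ := Nat.card (Isos M M)

/-- A subrepresentation: a family of submodules preserved by all the arrow maps. -/
structure Sub (X : QRep I A src tgt k) where
  U : ∀ i, Submodule k (X.V i)
  hU : ∀ a : A, U (src a) ≤ (U (tgt a)).comap (X.f a)

/-- A subrepresentation as a representation. -/
noncomputable def Sub.toRep {X : QRep I A src tgt k} (U : Sub X) : QRep I A src tgt k where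
  V i := U.U i
  f a := (X.f a).restrict (fun x hx => Submodule.mem_comap.mp (U.hU a hx))

/-- The quotient representation by a subrepresentation. -/
noncomputable def Sub.quotRep {X : QRep I A src tgt k} (U : Sub X) : QRep I A src tgt k where
  V i := X.V i ⧸ U.U i
  f a := Submodule.mapQ (U.U (src a)) (U.U (tgt a)) (X.f a) (U.hU a)

/-- The Hall number `g^X_{M,N}`: the number of subrepresentations U ⊆ X with U ≅ N
and X/U ≅ M. -/
noncomputable def hallNum (M N X : QRep I A src tgt k) : ℕ :=
  Nat.card {U : Sub X // IsIso U.toRep N ∧ IsIso U.quotRep M}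

end QRep

/-- The Euler–Ringel form `⟨α,β⟩ = ∑_i α_i β_i - ∑_{a : i→j} α_i β_j` of the quiver. -/
def ringelForm [Fintype I] [Fintype A] (α β : I → ℕ) : ℤ :=
  (∑ i : I, (α i : ℤ) * (β i : ℤ)) - ∑ a : A, (α (src a) : ℤ) * (β (tgt a) : ℤ)

namespace QRep

variable {I A src tgt k}

section Isomorphisms

variable {L M N : QRep I A src tgt k}

/-- The identity isomorphism. -/
def Isos.refl (M : QRep I A src tgt k) : Isos M M :=
  ⟨fun i => LinearEquiv.refl k (M.V i), fun _ _ => rfl⟩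

/-- The inverse of an isomorphism. -/
def Isos.symm (φ : Isos M N) : Isos N M :=
  ⟨fun i => (φ.1 i).symm, fun a x => by
    rw [LinearEquiv.symm_apply_eq, φ.2, LinearEquiv.apply_symm_apply]⟩

/-- The composition of isomorphisms. -/
def Isos.trans (φ : Isos L M) (ψ : Isos M N) : Isos L N :=
  ⟨fun i => (φ.1 i).trans (ψ.1 i), fun a x => by
    simp only [LinearEquiv.trans_apply, φ.2, ψ.2]⟩

theorem Isos.ext {φ ψ : Isos M N} (h : ∀ i x, φ.1 i x = ψ.1 i x) : φ = ψ :=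
  Subtype.ext (funext fun i => LinearEquiv.ext (h i))

/-- Precomposition with an isomorphism. -/
def Isos.congrLeft (φ : Isos L M) : Isos L N ≃ Isos M N where
  toFun ψ := φ.symm.trans ψ
  invFun ψ := φ.trans ψ
  left_inv ψ := Isos.ext fun i x => by simp [Isos.trans, Isos.symm]
  right_inv ψ := Isos.ext fun i x => by simp [Isos.trans, Isos.symm]

/-- Postcomposition with an isomorphism. -/
def Isos.congrRight (φ : Isos M N) : Isos L M ≃ Isos L N where
  toFun ψ := ψ.trans φ
  invFun ψ := ψ.trans φ.symm
  left_inv ψ := Isos.ext fun i x => by simp [Isos.trans, Isos.symm]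
  right_inv ψ := Isos.ext fun i x => by simp [Isos.trans, Isos.symm]

theorem isIso_equivalence :
    Equivalence (IsIso : QRep I A src tgt k → QRep I A src tgt k → Prop) :=
  ⟨fun M => ⟨Isos.refl M⟩, fun ⟨φ⟩ => ⟨φ.symm⟩, fun ⟨φ⟩ ⟨ψ⟩ => ⟨φ.trans ψ⟩⟩

instance [Finite I] [Finite k] : Finite (Isos M N) := by
  have (i : I) : Finite (M.V i) := Module.finite_of_finite k
  have (i : I) : Finite (N.V i) := Module.finite_of_finite k
  exact Finite.of_injective (fun (φ : Isos M N) i x => φ.1 i x)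
    fun φ ψ h => Isos.ext fun i x => congrFun (congrFun h i) x

theorem autCard_pos [Finite I] [Finite k] (M : QRep I A src tgt k) : 0 < autCard M :=
  have : Nonempty (Isos M M) := ⟨Isos.refl M⟩
  Nat.card_pos

end Isomorphisms

/-- Short exact sequences `0 → N → X → M → 0` of representations. -/
@[ext]
structure ShortExact (M N X : QRep I A src tgt k) where
  ι : ∀ i, N.V i →ₗ[k] X.V i
  π : ∀ i, X.V i →ₗ[k] M.V i
  ι_comm : ∀ (a : A) (n : N.V (src a)), ι (tgt a) (N.f a n) = X.f a (ι (src a) n)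
  π_comm : ∀ (a : A) (x : X.V (src a)), π (tgt a) (X.f a x) = M.f a (π (src a) x)
  ι_inj : ∀ i, Function.Injective (ι i)
  π_surj : ∀ i, Function.Surjective (π i)
  exact : ∀ i, LinearMap.range (ι i) = LinearMap.ker (π i)

section ExactSequences

variable {M N X : QRep I A src tgt k}

theorem Sub.ext {U U' : Sub X} (h : ∀ i, U.U i = U'.U i) : U = U' := by
  obtain ⟨U, _⟩ := U
  obtain ⟨U', _⟩ := U'
  obtain rfl : U = U' := funext h
  rfl

/-- The short exact sequence of a subrepresentation whose sub and quotient are identified with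
`N` and `M`. -/
def ShortExact.ofSub (U : Sub X) (α : Isos N U.toRep) (β : Isos U.quotRep M) :
    ShortExact M N X where
  ι i := (U.U i).subtype ∘ₗ (show N.V i ≃ₗ[k] U.U i from α.1 i).toLinearMap
  π i := (show (X.V i ⧸ U.U i) ≃ₗ[k] M.V i from β.1 i).toLinearMap ∘ₗ (U.U i).mkQ
  ι_comm a n := congrArg Subtype.val (α.2 a n)
  π_comm a x := β.2 a (Submodule.Quotient.mk x)
  ι_inj i := Subtype.val_injective.comp (α.1 i).injective
  π_surj i := (β.1 i).surjective.comp (Submodule.mkQ_surjective _)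
  exact i := by
    rw [LinearMap.range_comp, LinearEquiv.range, Submodule.map_top, Submodule.range_subtype]
    exact ((LinearEquiv.ker_comp (β.1 i) _).trans (Submodule.ker_mkQ _)).symm

theorem ShortExact.range_ofSub (U : Sub X) (α : Isos N U.toRep) (β : Isos U.quotRep M) (i : I) :
    LinearMap.range ((ShortExact.ofSub U α β).ι i) = U.U i := by
  change LinearMap.range ((U.U i).subtype ∘ₗ (show N.V i ≃ₗ[k] U.U i from α.1 i).toLinearMap) = _
  rw [LinearMap.range_comp, LinearEquiv.range, Submodule.map_top, Submodule.range_subtype]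

theorem ShortExact.π_ι_apply (s : ShortExact M N X) (i : I) (n : N.V i) :
    s.π i (s.ι i n) = 0 :=
  LinearMap.mem_ker.1 (s.exact i ▸ LinearMap.mem_range_self (s.ι i) n)

/-- The image of the first map of a short exact sequence. -/
def ShortExact.image (s : ShortExact M N X) : Sub X where
  U i := LinearMap.range (s.ι i)
  hU a := by
    rintro _ ⟨n, rfl⟩
    exact ⟨N.f a n, s.ι_comm a n⟩

/-- The identification of `N` with its image. -/
noncomputable def ShortExact.isoImage (s : ShortExact M N X) : Isos N s.image.toRep :=
  ⟨fun i => LinearEquiv.ofInjective (s.ι i) (s.ι_inj i), fun a n => Subtype.ext (s.ι_comm a n)⟩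

/-- The identification of the cokernel with `M`. -/
noncomputable def ShortExact.isoQuot (s : ShortExact M N X) : Isos s.image.quotRep M :=
  ⟨fun i => (Submodule.quotEquivOfEq _ _ (s.exact i)).trans
      ((s.π i).quotKerEquivOfSurjective (s.π_surj i)), fun a x => by
    induction x using Submodule.Quotient.induction_on with
    | H x => exact s.π_comm a x⟩

theorem ShortExact.ofSub_bijective :
    Function.Bijective (fun t : (Σ U : {U : Sub X // IsIso U.toRep N ∧ IsIso U.quotRep M},
      Isos N U.1.toRep × Isos U.1.quotRep M) => ShortExact.ofSub t.1.1 t.2.1 t.2.2) := by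
  constructor
  · rintro ⟨⟨U, hU⟩, α, β⟩ ⟨⟨U', hU'⟩, α', β'⟩ h
    have h : ShortExact.ofSub U α β = ShortExact.ofSub U' α' β' := h
    obtain rfl : U = U' := Sub.ext fun i => by
      rw [← ShortExact.range_ofSub U α β, h, ShortExact.range_ofSub]
    obtain rfl : α = α' := Isos.ext fun i x => Subtype.ext <| by
      exact LinearMap.congr_fun (congrFun (congrArg ShortExact.ι h) i) x
    obtain rfl : β = β' := Isos.ext fun i x => by
      obtain ⟨x, rfl⟩ := Submodule.mkQ_surjective (U.U i) x
      exact LinearMap.congr_fun (congrFun (congrArg ShortExact.π h) i) x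
    rfl
  · intro s
    exact ⟨⟨⟨s.image, ⟨s.isoImage.symm⟩, ⟨s.isoQuot⟩⟩, s.isoImage, s.isoQuot⟩, rfl⟩

theorem card_shortExact (M N X : QRep I A src tgt k) :
    Nat.card (ShortExact M N X) = hallNum M N X * (autCard N * autCard M) := by
  rw [← Nat.card_congr (Equiv.ofBijective _ ShortExact.ofSub_bijective), hallNum, autCard, autCard,
    ← Nat.card_prod, ← Nat.card_prod]
  exact Nat.card_congr <| (Equiv.sigmaCongrRight fun U =>
    (Isos.congrRight U.2.1.some).prodCongr (Isos.congrLeft U.2.2.some)).trans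
    (Equiv.sigmaEquivProd _ _)

end ExactSequences

section Extensions

variable {M N : QRep I A src tgt k}

/-- The extension of `M` by `N` on the spaces `N.V i × M.V i` with off-diagonal part `e`. -/
def extRep (e : ∀ a : A, M.V (src a) →ₗ[k] N.V (tgt a)) : QRep I A src tgt k where
  V i := N.V i × M.V i
  f a := ((N.f a).coprod (e a)).prod (M.f a ∘ₗ LinearMap.snd k _ _)

theorem extRep_f_apply (e : ∀ a : A, M.V (src a) →ₗ[k] N.V (tgt a)) (a : A)
    (n : N.V (src a)) (m : M.V (src a)) :
    (extRep e).f a (n, m) = (N.f a n + e a m, M.f a m) := rfl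

theorem dimVec_extRep (e : ∀ a : A, M.V (src a) →ₗ[k] N.V (tgt a)) :
    (extRep e).dimVec = fun i => M.dimVec i + N.dimVec i :=
  funext fun i => (Module.finrank_prod (R := k) (M := N.V i) (M' := M.V i)).trans (add_comm _ _)

variable {X : QRep I A src tgt k}

/-- A vertexwise linear splitting of a short exact sequence. -/
def ShortExact.Splitting (s : ShortExact M N X) : Type :=
  ∀ i, {σ : M.V i →ₗ[k] X.V i // ∀ m, s.π i (σ m) = m}

/-- The short exact sequence of an isomorphism from a model extension. -/
def ShortExact.ofIso (e : ∀ a : A, M.V (src a) →ₗ[k] N.V (tgt a)) (φ : Isos (extRep e) X) :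
    ShortExact M N X where
  ι i := (show (N.V i × M.V i) ≃ₗ[k] X.V i from φ.1 i).toLinearMap ∘ₗ LinearMap.inl k _ _
  π i := LinearMap.snd k _ _ ∘ₗ (show (N.V i × M.V i) ≃ₗ[k] X.V i from φ.1 i).symm.toLinearMap
  ι_comm a n := by
    refine Eq.trans ?_ (φ.2 a (n, 0))
    change φ.1 (tgt a) (N.f a n, 0) = _
    rw [extRep_f_apply, map_zero, map_zero, add_zero]
  π_comm a x := congrArg Prod.snd (φ.symm.2 a x)
  ι_inj i := (φ.1 i).injective.comp LinearMap.inl_injective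
  π_surj i := Prod.snd_surjective.comp (φ.1 i).symm.surjective
  exact i := by
    ext x
    constructor
    · rintro ⟨n, rfl⟩
      exact congrArg Prod.snd ((φ.1 i).symm_apply_apply ((n, 0) : N.V i × M.V i))
    · intro hx
      have hx : ((φ.1 i).symm x : N.V i × M.V i).2 = 0 := hx
      refine ⟨((φ.1 i).symm x : N.V i × M.V i).1, ?_⟩
      refine Eq.trans (congrArg (φ.1 i) ?_) ((φ.1 i).apply_symm_apply x)
      exact Prod.ext rfl hx.symm

/-- A splitting identifies the middle term with the direct sum, vertexwise. -/
noncomputable def ShortExact.Splitting.equiv {s : ShortExact M N X} (σ : s.Splitting) (i : I) :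
    (N.V i × M.V i) ≃ₗ[k] X.V i :=
  LinearEquiv.ofBijective ((s.ι i).coprod (σ i).1) <| by
    constructor
    · rw [← LinearMap.ker_eq_bot, LinearMap.ker_eq_bot']
      rintro ⟨n, m⟩ h
      rw [LinearMap.coprod_apply] at h
      have hm : m = 0 := by
        have := congrArg (s.π i) h
        rwa [map_add, s.π_ι_apply, (σ i).2, zero_add, map_zero] at this
      subst hm
      rw [map_zero, add_zero] at h
      exact Prod.ext (s.ι_inj i (h.trans (map_zero _).symm)) rfl
    · intro x
      have hx : x - (σ i).1 (s.π i x) ∈ LinearMap.range (s.ι i) := by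
        rw [s.exact, LinearMap.mem_ker, map_sub, (σ i).2, sub_self]
      obtain ⟨n, hn⟩ := hx
      exact ⟨(n, s.π i x), by rw [LinearMap.coprod_apply, hn, sub_add_cancel]⟩

theorem ShortExact.Splitting.equiv_apply {s : ShortExact M N X} (σ : s.Splitting) (i : I)
    (n : N.V i) (m : M.V i) : σ.equiv i (n, m) = s.ι i n + (σ i).1 m := rfl

theorem ShortExact.Splitting.snd_equiv_symm {s : ShortExact M N X} (σ : s.Splitting) (i : I)
    (x : X.V i) : ((σ.equiv i).symm x).2 = s.π i x := by
  obtain ⟨⟨n, m⟩, rfl⟩ := (σ.equiv i).surjective x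
  rw [LinearEquiv.symm_apply_apply, equiv_apply, map_add, s.π_ι_apply, (σ i).2, zero_add]

/-- The off-diagonal part of the middle term with respect to a splitting. -/
noncomputable def ShortExact.Splitting.cocycle {s : ShortExact M N X} (σ : s.Splitting) (a : A) :
    M.V (src a) →ₗ[k] N.V (tgt a) :=
  LinearMap.fst k _ _ ∘ₗ ((σ.equiv (tgt a)).symm : X.V (tgt a) →ₗ[k] N.V (tgt a) × M.V (tgt a)) ∘ₗ
    X.f a ∘ₗ (σ (src a)).1

/-- The isomorphism from a model extension given by a splitting. -/
noncomputable def ShortExact.Splitting.iso {s : ShortExact M N X} (σ : s.Splitting) :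
    Isos (extRep σ.cocycle) X :=
  ⟨σ.equiv, by
    rintro a ⟨n, m⟩
    have hm : σ.equiv (tgt a) (σ.cocycle a m, M.f a m) = X.f a ((σ (src a)).1 m) := by
      rw [← LinearEquiv.eq_symm_apply]
      refine Prod.ext rfl ?_
      rw [snd_equiv_symm, s.π_comm, (σ (src a)).2]
    have hn : σ.equiv (tgt a) (N.f a n, 0) = X.f a (s.ι (src a) n) := by
      rw [equiv_apply, map_zero, add_zero, s.ι_comm]
    change σ.equiv (tgt a) (N.f a n + σ.cocycle a m, M.f a m) =
      X.f a (s.ι (src a) n + (σ (src a)).1 m)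
    rw [map_add, ← hm, ← hn, ← map_add, Prod.mk_add_mk, zero_add]⟩

theorem ShortExact.Splitting.iso_bijective :
    Function.Bijective (fun t : (Σ s : ShortExact M N X, s.Splitting) =>
      (⟨t.2.cocycle, t.2.iso⟩ :
        Σ e : ∀ a : A, M.V (src a) →ₗ[k] N.V (tgt a), Isos (extRep e) X)) := by
  have key : ∀ p q : (Σ e : ∀ a : A, M.V (src a) →ₗ[k] N.V (tgt a), Isos (extRep e) X),
      (∀ i (y : N.V i × M.V i), p.2.1 i y = q.2.1 i y) → p = q := by
    rintro ⟨e, φ⟩ ⟨e', φ'⟩ h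
    obtain rfl : e = e' := by
      funext a
      ext m
      have h₁ := φ.2 a (0, m)
      have h₂ := φ'.2 a (0, m)
      have h₃ := (h (tgt a) ((extRep e).f a (0, m))).symm.trans
        (h₁.trans ((congrArg (X.f a) (h (src a) (0, m))).trans h₂.symm))
      have h₄ := (φ'.1 (tgt a)).injective h₃
      rw [extRep_f_apply, extRep_f_apply] at h₄
      exact add_left_cancel (congrArg Prod.fst h₄)
    obtain rfl : φ = φ' := Isos.ext h
    rfl
  constructor
  · rintro ⟨s, σ⟩ ⟨s', σ'⟩ h
    have hequiv : ∀ i, σ.equiv i = σ'.equiv i := fun i =>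
      congrArg (fun p : (Σ e : ∀ a : A, M.V (src a) →ₗ[k] N.V (tgt a), Isos (extRep e) X) =>
        (show (N.V i × M.V i) ≃ₗ[k] X.V i from p.2.1 i)) h
    obtain rfl : s = s' := by
      refine ShortExact.ext (funext fun i => LinearMap.ext fun n => ?_)
        (funext fun i => LinearMap.ext fun x => ?_)
      · have := LinearEquiv.congr_fun (hequiv i) (n, 0)
        simpa only [equiv_apply, map_zero, add_zero] using this
      · rw [← σ.snd_equiv_symm, hequiv, snd_equiv_symm]
    obtain rfl : σ = σ' := by
      refine funext fun i => Subtype.ext (LinearMap.ext fun m => ?_)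
      have := LinearEquiv.congr_fun (hequiv i) (0, m)
      simpa only [equiv_apply, map_zero, zero_add] using this
    rfl
  · rintro ⟨e, φ⟩
    let σ : (ShortExact.ofIso e φ).Splitting := fun i =>
      ⟨(show (N.V i × M.V i) ≃ₗ[k] X.V i from φ.1 i).toLinearMap ∘ₗ LinearMap.inr k _ _, fun m =>
        congrArg Prod.snd ((φ.1 i).symm_apply_apply ((0, m) : N.V i × M.V i))⟩
    refine ⟨⟨ShortExact.ofIso e φ, σ⟩, key _ _ ?_⟩
    rintro i ⟨n, m⟩
    change φ.1 i (n, 0) + φ.1 i (0, m) = φ.1 i (n, m)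
    refine ((φ.1 i).map_add (n, 0) (0, m)).symm.trans (congrArg (φ.1 i) ?_)
    exact Prod.ext (add_zero n) (zero_add m)

theorem ShortExact.nonempty_splitting (s : ShortExact M N X) : Nonempty s.Splitting :=
  ⟨fun i =>
    have h := (s.π i).exists_rightInverse_of_surjective (LinearMap.range_eq_top.2 (s.π_surj i))
    ⟨h.choose, LinearMap.congr_fun h.choose_spec⟩⟩

/-- Splittings form a torsor under families of linear maps `M.V i → N.V i`. -/
noncomputable def ShortExact.splittingEquiv (s : ShortExact M N X) :
    (∀ i, M.V i →ₗ[k] N.V i) ≃ s.Splitting :=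
  Equiv.piCongrRight fun i =>
    let σ := s.nonempty_splitting.some i
    Equiv.ofBijective (fun h => ⟨σ.1 + s.ι i ∘ₗ h, fun m => by
      rw [LinearMap.add_apply, LinearMap.comp_apply, map_add, s.π_ι_apply, add_zero, σ.2]⟩) <| by
    constructor
    · intro h h' hh
      ext m
      exact s.ι_inj i (add_left_cancel (LinearMap.congr_fun (congrArg Subtype.val hh) m))
    · intro τ
      have hτ : ∀ m, (τ.1 - σ.1) m ∈ LinearMap.range (s.ι i) := fun m => by
        rw [s.exact, LinearMap.mem_ker, LinearMap.sub_apply, map_sub, τ.2, σ.2, sub_self]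
      refine ⟨(LinearEquiv.ofInjective (s.ι i) (s.ι_inj i)).symm ∘ₗ (τ.1 - σ.1).codRestrict _ hτ,
        Subtype.ext (LinearMap.ext fun m => ?_)⟩
      have := congrArg Subtype.val ((LinearEquiv.ofInjective (s.ι i) (s.ι_inj i)).apply_symm_apply
        ((τ.1 - σ.1).codRestrict _ hτ m))
      refine (congrArg (σ.1 m + ·) this).trans ?_
      change σ.1 m + (τ.1 m - σ.1 m) = τ.1 m
      exact add_sub_cancel _ _

theorem card_sigma_isos_extRep (M N X : QRep I A src tgt k) :
    Nat.card (Σ e : ∀ a : A, M.V (src a) →ₗ[k] N.V (tgt a), Isos (extRep e) X) =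
      hallNum M N X * (autCard N * autCard M) * Nat.card (∀ i, M.V i →ₗ[k] N.V i) := by
  rw [← Nat.card_congr (Equiv.ofBijective _ ShortExact.Splitting.iso_bijective),
    ← card_shortExact, ← Nat.card_prod]
  exact Nat.card_congr ((Equiv.sigmaCongrRight fun s => s.splittingEquiv.symm).trans
    (Equiv.sigmaEquivProd _ _))

/-- Isomorphisms from members of a family onto `X` correspond to the members isomorphic to `X`
together with an automorphism of `X`. -/
theorem card_sigma_isos (E : Type) (F : E → QRep I A src tgt k) (X : QRep I A src tgt k) :
    Nat.card (Σ e, Isos (F e) X) = Nat.card {e // IsIso (F e) X} * autCard X := by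
  rw [autCard, ← Nat.card_prod]
  exact Nat.card_congr
    { toFun := fun p => (⟨p.1, ⟨p.2⟩⟩, Isos.congrLeft (Nonempty.some ⟨p.2⟩) p.2)
      invFun := fun p => ⟨p.1.1, (Isos.congrLeft p.1.2.some).symm p.2⟩
      left_inv := fun p => by simp
      right_inv := fun p => by simp }

end Extensions

theorem card_pi_linearMap [Fintype k] {ι : Type} [Fintype ι] (V W : ι → Type)
    [∀ i, AddCommGroup (V i)] [∀ i, Module k (V i)] [∀ i, FiniteDimensional k (V i)]
    [∀ i, AddCommGroup (W i)] [∀ i, Module k (W i)] [∀ i, FiniteDimensional k (W i)] :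
    Nat.card (∀ i, V i →ₗ[k] W i) =
      Fintype.card k ^ ∑ i, Module.finrank k (V i) * Module.finrank k (W i) := by
  rw [Nat.card_pi, ← Finset.prod_pow_eq_pow_sum]
  refine Finset.prod_congr rfl fun i _ => ?_
  rw [Module.natCard_eq_pow_finrank (K := k), Module.finrank_linearMap, Nat.card_eq_fintype_card]

/-- The fibres of a map from a finite type partition it. -/
theorem finsum_card_fiber {E C : Type*} [Finite E] (p : E → C) :
    ∑ᶠ c, (Nat.card {e // p e = c} : ℚ) = Nat.card E := by
  classical
  have := Fintype.ofFinite E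
  rw [finsum_eq_sum_of_support_subset (s := Finset.univ.image p)]
  · rw [Nat.card_eq_fintype_card, ← Finset.card_univ,
      Finset.card_eq_sum_card_image p Finset.univ, Nat.cast_sum]
    refine Finset.sum_congr rfl fun c _ => ?_
    rw [Nat.card_eq_fintype_card, Fintype.card_subtype]
  · intro c hc
    rw [Function.mem_support, Nat.cast_ne_zero] at hc
    obtain ⟨⟨e, he⟩⟩ := (Nat.card_ne_zero.1 hc).1
    exact Finset.mem_coe.2 (Finset.mem_image.2 ⟨e, Finset.mem_univ e, he⟩)

end QRep

open QRep in
/-- multiplicativity of the integration map `[M] ↦ x^{dim M}/#Aut M` from the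
Hall algebra to the twisted polynomial ring with `x^α ∘ x^β = (#k)^{-⟨α,β⟩} x^{α+β}`:
comparing the coefficients of `x^{dim M + dim N}` in `∫([M]·[N]) = ∫[M] ∘ ∫[N]` gives the
stated identity, where the sum runs over the isomorphism classes of representations of
dimension vector `dim M + dim N`. -/
theorem integral_is_algebra_hom [Fintype I] [Fintype A] [Fintype k]
    (M N : QRep I A src tgt k) :
    ∑ᶠ c : Quot (fun X Y : {X : QRep I A src tgt k //
          X.dimVec = fun i => M.dimVec i + N.dimVec i} => IsIso X.1 Y.1),
        (hallNum M N (Quot.out c).1 : ℚ) / (autCard (Quot.out c).1 : ℚ)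
      = (Fintype.card k : ℚ) ^ (-(ringelForm I A src tgt (dimVec M) (dimVec N))) /
          ((autCard M : ℚ) * (autCard N : ℚ)) := by
  have hq : (Fintype.card k : ℚ) ≠ 0 := Nat.cast_ne_zero.2 Fintype.card_ne_zero
  have hM : (autCard M : ℚ) ≠ 0 := Nat.cast_ne_zero.2 (autCard_pos M).ne'
  have hN : (autCard N : ℚ) ≠ 0 := Nat.cast_ne_zero.2 (autCard_pos N).ne'
  set r := fun X Y : {X : QRep I A src tgt k //
    X.dimVec = fun i => M.dimVec i + N.dimVec i} => IsIso X.1 Y.1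
  have hequiv : Equivalence r :=
    ⟨fun X => isIso_equivalence.refl X.1, isIso_equivalence.symm, isIso_equivalence.trans⟩
  let E := ∀ a : A, M.V (src a) →ₗ[k] N.V (tgt a)
  let H := ∀ i, M.V i →ₗ[k] N.V i
  have hE : Nat.card E = Fintype.card k ^ ∑ a, M.dimVec (src a) * N.dimVec (tgt a) :=
    card_pi_linearMap (fun a => M.V (src a)) (fun a => N.V (tgt a))
  have hH : Nat.card H = Fintype.card k ^ ∑ i, M.dimVec i * N.dimVec i :=
    card_pi_linearMap M.V N.V
  have hH0 : (Nat.card H : ℚ) ≠ 0 := by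
    rw [hH]
    exact_mod_cast pow_ne_zero _ Fintype.card_ne_zero
  have hEfin : Finite E := by
    refine Nat.finite_of_card_ne_zero ?_
    rw [hE]
    exact pow_ne_zero _ Fintype.card_ne_zero
  let p : E → Quot r := fun e => Quot.mk r ⟨extRep e, dimVec_extRep e⟩
  have hp (e : E) (c : Quot r) : p e = c ↔ IsIso (extRep e) (Quot.out c).1 := by
    conv_lhs => rw [← Quot.out_eq c]
    exact (Quot.eq (r := r)).trans hequiv.eqvGen_iff
  have hterm (c : Quot r) :
      (hallNum M N (Quot.out c).1 : ℚ) / (autCard (Quot.out c).1 : ℚ) =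
        (Nat.card {e // p e = c} : ℚ) * (autCard M * autCard N * Nat.card H : ℚ)⁻¹ := by
    have hX : (autCard (Quot.out c).1 : ℚ) ≠ 0 := Nat.cast_ne_zero.2 (autCard_pos _).ne'
    have h := (card_sigma_isos_extRep M N (Quot.out c).1).symm.trans (card_sigma_isos E extRep _)
    rw [← Nat.card_congr (Equiv.subtypeEquivRight fun e => hp e c)] at h
    have h' := congrArg (Nat.cast : ℕ → ℚ) h
    push_cast at h'
    field_simp
    linear_combination h'
  rw [finsum_congr hterm, ← finsum_mul, finsum_card_fiber, hE, hH, ringelForm, neg_sub,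
    zpow_sub₀ hq]
  push_cast
  have h₁ : (∑ a, (M.dimVec (src a) : ℤ) * N.dimVec (tgt a)) =
      ((∑ a, M.dimVec (src a) * N.dimVec (tgt a) : ℕ) : ℤ) := by push_cast; rfl
  have h₂ : (∑ i, (M.dimVec i : ℤ) * N.dimVec i) =
      ((∑ i, M.dimVec i * N.dimVec i : ℕ) : ℤ) := by push_cast; rfl
  rw [h₁, h₂, zpow_natCast, zpow_natCast]
  field_simp
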